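/- arXiv:1001.2638 — 2 statements merged into one kernel-verified Lean document; each statement's English description precedes it below -/
import Mathlib

section
/- Let p be a prime with p ≡ 3 (mod 4). Then T(p) = (p/2) · Σ_{k=1}^{p-1} (-1)^{k+1} (k/p), where (k/p) is the Legendre symbol. -/
/-- `T p = √p ∑_{n=1}^{(p-1)/2} tan(π n² / p)`. -/
noncomputable def T (p : ℕ) : ℝ :=
  Real.sqrt p * ∑ n ∈ Finset.Icc 1 ((p - 1) / 2), Real.tan (Real.pi * (n : ℝ) ^ 2 / p)

/-!
Expanding `tan (π j² / p)` as an alternating sum of the sines `sin (2 k π j² / p)`, `0 < k < p`, and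
summing over `j` first gives `T p = √p / 2 * Im G * ∑ (-1)^(k+1) (k/p)`, where `G` is the quadratic
Gauss sum for `ζ = exp (2πi / p)`. If `p ≡ 3 (mod 4)` then `G = i √p`; if `p ≡ 1 (mod 4)` then the
alternating sum vanishes, since the terms of `k` and `p - k` cancel.

The sign of `G` comes from `G = ∏ (ζ^(-k/2) - ζ^(k/2))`, `1 ≤ k ≤ (p-1)/2`, exponents being read
modulo `p`. Both sides have square `(-1)^((p-1)/2) p`. If they were opposite, the sum of the two
corresponding integer polynomials would vanish at `ζ`, hence be divisible by `(X - 1)^(p-1)` modulo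
`p`, and so would be sent by the `(p-1)/2`-th power of `X d/dX` to a polynomial vanishing at `1`
modulo `p`; but there each of the two gives `-1`, by the theorems of Fermat and Wilson.
-/

open Finset

section Halves

@[to_additive sum_Icc_one_eq_sum_half]
lemma prod_Icc_one_eq_prod_half {M : Type*} [CommMonoid M] {n : ℕ} (hn : Odd n) (f : ℕ → M) :
    ∏ k ∈ Icc 1 (n - 1), f k = ∏ k ∈ Icc 1 (n / 2), f k * f (n - k) := by
  obtain ⟨m, rfl⟩ := hn
  have hm : (2 * m + 1) / 2 = m := by lia
  have hreflect : ∏ k ∈ Ico 1 (m + 1), f (2 * m + 1 - k) = ∏ k ∈ Ico (m + 1) (2 * m + 1), f k :=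
    prod_nbij' (2 * m + 1 - ·) (2 * m + 1 - ·) (by grind) (by grind) (by grind) (by grind)
      (by grind)
  simp only [← Ico_add_one_right_eq_Icc, prod_mul_distrib, hm, Nat.add_sub_cancel]
  rw [hreflect, prod_Ico_consecutive f (by lia) (by lia)]

lemma sum_alternating_eq_zero {R : Type*} [Ring R] {n : ℕ} (hn : Odd n) {f : ℕ → R}
    (hf : ∀ k ∈ Icc 1 (n / 2), f (n - k) = f k) :
    ∑ k ∈ Icc 1 (n - 1), (-1 : R) ^ (k + 1) * f k = 0 := by
  rw [sum_Icc_one_eq_sum_half hn]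
  refine sum_eq_zero fun k hk => ?_
  have hsign : (-1 : R) ^ (n - k + 1) = -(-1) ^ (k + 1) := by
    have hparity : Even (n - k + 1) ↔ Even (k + 1 + 1) := by
      rw [mem_Icc] at hk
      rw [Nat.odd_iff] at hn
      rw [Nat.even_iff, Nat.even_iff]
      lia
    rw [neg_one_pow_congr hparity, pow_succ', neg_one_mul]
  rw [hf k hk, hsign, neg_mul, add_neg_cancel]

lemma sum_zmod_eq_sum_half {M : Type*} [AddCommMonoid M] {n : ℕ} [NeZero n] (hn : Odd n)
    (f : ZMod n → M) :
    ∑ x, f x = f 0 + ∑ k ∈ Icc 1 (n / 2), (f k + f (-k)) := by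
  have hrange : ∑ x, f x = ∑ k ∈ range n, f k :=
    sum_nbij' ZMod.val (fun k => (k : ZMod n)) (fun x _ => mem_range.2 x.val_lt)
      (fun _ _ => mem_univ _) (fun x _ => x.natCast_zmod_val)
      (fun k hk => ZMod.val_cast_of_lt (mem_range.1 hk)) (fun x _ => by rw [x.natCast_zmod_val])
  have hneg : ∀ k ∈ Icc 1 (n / 2), f k + f (-k) = f k + f ((n - k : ℕ) : ZMod n) := by
    intro k hk
    have hkn : k ≤ n := by rw [mem_Icc] at hk; lia
    rw [Nat.cast_sub hkn, ZMod.natCast_self, zero_sub]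
  rw [hrange, sum_congr rfl hneg, ← sum_Icc_one_eq_sum_half hn (fun k => f k),
    range_eq_Ico, sum_eq_sum_Ico_succ_bot hn.pos, Nat.cast_zero]
  congr 2

end Halves

section EulerOperator

open Polynomial

/-- The Euler operator `f ↦ X f'`. Monomials are its eigenvectors, with `X ^ n` belonging to `n`. -/
noncomputable def eulerOperator (R : Type*) [CommSemiring R] : Module.End R R[X] :=
  LinearMap.mulLeft R X ∘ₗ derivative

lemma eulerOperator_apply {R : Type*} [CommSemiring R] (f : R[X]) :
    eulerOperator R f = X * derivative f := rfl

lemma eulerOperator_pow_monomial {R : Type*} [CommSemiring R] (m n : ℕ) (c : R) :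
    (eulerOperator R ^ m) (monomial n c) = monomial n (c * n ^ m) := by
  induction m with
  | zero => simp
  | succ m ih =>
    rw [pow_succ', Module.End.mul_apply, ih, eulerOperator_apply, derivative_monomial,
      X_mul_monomial, mul_assoc, ← pow_succ]
    cases n with
    | zero => simp
    | succ n => rw [Nat.add_sub_cancel]

variable {R : Type*} [CommRing R]

lemma eval_one_eulerOperator_pow_X_sub_one_pow_mul (m : ℕ) (f : R[X]) :
    ((eulerOperator R ^ m) ((X - 1) ^ m * f)).eval 1 = m.factorial * f.eval 1 := by
  induction m generalizing f with
  | zero => simp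
  | succ m ih =>
    have hstep : eulerOperator R ((X - 1) ^ (m + 1) * f) =
        (X - 1) ^ m * (((m + 1 : ℕ) : R[X]) * X * f + (X - 1) * (X * derivative f)) := by
      rw [eulerOperator_apply, derivative_mul, derivative_pow]
      simp only [Nat.cast_succ, C_add, map_natCast, map_one, Nat.add_sub_cancel, derivative_sub,
        derivative_X, derivative_one, sub_zero, mul_one]
      ring
    rw [pow_succ, Module.End.mul_apply, hstep, ih, Nat.factorial_succ]
    simp only [eval_add, eval_mul, eval_natCast, eval_one, eval_X, eval_sub, sub_self, zero_mul,
      add_zero, mul_one, Nat.cast_mul]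
    ring

lemma eval_one_eulerOperator_pow_prod_X_pow_sub_X_pow {ι : Type*} (s : Finset ι) (a b : ι → ℕ) :
    ((eulerOperator R ^ #s) (∏ i ∈ s, (X ^ a i - X ^ b i))).eval 1 =
      (#s).factorial * ∏ i ∈ s, ((a i : R) - b i) := by
  have hfactor : ∏ i ∈ s, (X ^ a i - X ^ b i) = (X - 1 : R[X]) ^ #s *
      ∏ i ∈ s, (∑ j ∈ range (a i), X ^ j - ∑ j ∈ range (b i), X ^ j) := by
    rw [pow_card_mul_prod]
    refine prod_congr rfl fun i _ => ?_
    rw [mul_sub, mul_geom_sum, mul_geom_sum, sub_sub_sub_cancel_right]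
  rw [hfactor, eval_one_eulerOperator_pow_X_sub_one_pow_mul, eval_prod]
  simp [eval_finsetSum]

variable {K : Type*} [Field K] [CharZero K] {p : ℕ} [Fact p.Prime]

lemma X_sub_one_pow_dvd_map_of_aeval_eq_zero {ω : K} (hω : IsPrimitiveRoot ω p) {f : ℤ[X]}
    (hf : aeval ω f = 0) : (X - 1) ^ (p - 1) ∣ f.map (Int.castRingHom (ZMod p)) := by
  have hp : p.Prime := Fact.out
  have hcyclotomic : cyclotomic p (ZMod p) = (X - 1) ^ (p - 1) := by
    simpa using cyclotomic_mul_prime_eq_pow_of_not_dvd (ZMod p) hp.not_dvd_one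
  rw [← hcyclotomic, ← map_cyclotomic_int, cyclotomic_eq_minpoly hω hp.pos]
  exact Polynomial.map_dvd _ (minpoly.isIntegrallyClosed_dvd (hω.isIntegral hp.pos) hf)

lemma eval_one_eulerOperator_pow_map_eq_zero {ω : K} (hω : IsPrimitiveRoot ω p) {f : ℤ[X]}
    (hf : aeval ω f = 0) {m : ℕ} (hm : m < p - 1) :
    ((eulerOperator (ZMod p) ^ m) (f.map (Int.castRingHom (ZMod p)))).eval 1 = 0 := by
  obtain ⟨g, hg⟩ := X_sub_one_pow_dvd_map_of_aeval_eq_zero hω hf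
  rw [hg, ← Nat.add_sub_cancel' hm.le, pow_add, mul_assoc,
    eval_one_eulerOperator_pow_X_sub_one_pow_mul]
  simp [Nat.sub_ne_zero_of_lt hm]

end EulerOperator

section QuadraticGaussSum

variable {F R : Type*} [Field F] [Fintype F] [DecidableEq F] [CommRing R]

/-- The Gauss sum `∑ χ(x) ψ(x)` of an additive character `ψ` and the quadratic character `χ` of
the finite field `F`, whose values `0`, `1`, `-1` are read in the target ring `R` of `ψ`. -/
noncomputable def quadraticGaussSum (ψ : AddChar F R) : R :=
  gaussSum ((quadraticChar F).ringHomComp (Int.castRingHom R)) ψ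

lemma quadraticGaussSum_eq_sum (ψ : AddChar F R) :
    quadraticGaussSum ψ = ∑ x, (quadraticChar F x : R) * ψ x := rfl

lemma quadraticGaussSum_sq [IsDomain R] (hF : ringChar F ≠ 2) (hR : ringChar R ≠ 2)
    {ψ : AddChar F R} (hψ : ψ.IsPrimitive) :
    quadraticGaussSum ψ ^ 2 = (-1) ^ (Fintype.card F / 2) * Fintype.card F := by
  have hne : (quadraticChar F).ringHomComp (Int.castRingHom R) ≠ 1 := fun h => by
    obtain ⟨a, ha⟩ := quadraticChar_exists_neg_one' hF
    have hval := DFunLike.congr_fun h (a : F)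
    rw [MulChar.ringHomComp_apply, ha, map_neg, map_one, MulChar.one_apply_coe] at hval
    exact Ring.neg_one_ne_one_of_char_ne_two hR hval
  have hneg : quadraticChar F (-1) = (-1) ^ (Fintype.card F / 2) := by
    rw [quadraticChar_neg_one hF,
      ZMod.χ₄_eq_neg_one_pow (FiniteField.odd_card_of_char_ne_two hF)]
  rw [quadraticGaussSum, gaussSum_sq hne ((quadraticChar_isQuadratic F).comp _) hψ,
    MulChar.ringHomComp_apply, hneg]
  simp

lemma sum_addChar_mul_sq [IsDomain R] (hF : ringChar F ≠ 2) {ψ : AddChar F R}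
    (hψ : ψ.IsPrimitive) {a : F} (ha : a ≠ 0) :
    ∑ x, ψ (a * x ^ 2) = quadraticChar F a * quadraticGaussSum ψ := by
  have hfiber : ∀ y : F, ∑ x with x ^ 2 = y, ψ (a * x ^ 2) =
      (quadraticChar F y + 1 : R) * ψ (a * y) := by
    intro y
    have hcard : (#{x : F | x ^ 2 = y} : ℤ) = quadraticChar F y + 1 := by
      simpa using quadraticChar_card_sqrts hF y
    have hcardR : (#{x : F | x ^ 2 = y} : R) = quadraticChar F y + 1 := by
      exact_mod_cast congrArg (Int.cast : ℤ → R) hcard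
    rw [← hcardR, ← nsmul_eq_mul, ← sum_const]
    exact sum_congr rfl fun x hx => by rw [(mem_filter.1 hx).2]
  have hvanish : ∑ y, ψ (a * y) = 0 := by
    simpa [mul_comm a, ha] using AddChar.sum_mulShift a hψ
  have hshift : (quadraticChar F a : R) * ∑ y, (quadraticChar F y : R) * ψ (a * y) =
      quadraticGaussSum ψ :=
    gaussSum_mulShift ((quadraticChar F).ringHomComp (Int.castRingHom R)) ψ (Units.mk0 a ha)
  have hsq : (quadraticChar F a : R) * quadraticChar F a = 1 := by
    rw [← sq, ← Int.cast_pow, quadraticChar_sq_one ha, Int.cast_one]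
  rw [← sum_fiberwise univ (fun x => x ^ 2), sum_congr rfl fun y _ => hfiber y, ← hshift,
    ← mul_assoc, hsq]
  simp only [add_mul, one_mul, sum_add_distrib, hvanish, add_zero]

end QuadraticGaussSum

section PrimitiveAddChar

lemma addChar_one_pow {R : Type*} [CommMonoid R] {n : ℕ} (ψ : AddChar (ZMod n) R) (k : ℕ) :
    ψ 1 ^ k = ψ k := by
  rw [← AddChar.map_nsmul_eq_pow, nsmul_one]

lemma isPrimitiveRoot_addChar_one {R : Type*} [CommMonoid R] {n : ℕ} [NeZero n]
    {ψ : AddChar (ZMod n) R} (hψ : ψ.IsPrimitive) : IsPrimitiveRoot (ψ 1) n where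
  pow_eq_one := by rw [addChar_one_pow, ZMod.natCast_self, AddChar.map_zero_eq_one]
  dvd_of_pow_eq_one k hk := by
    rw [addChar_one_pow, hψ.zmod_char_eq_one_iff] at hk
    exact (ZMod.natCast_eq_zero_iff k n).1 hk

lemma prod_one_sub_addChar {R : Type*} [CommRing R] [IsDomain R] {n : ℕ} [NeZero n]
    {ψ : AddChar (ZMod n) R} (hψ : ψ.IsPrimitive) :
    ∏ k ∈ Icc 1 (n - 1), (1 - ψ k) = n := by
  obtain ⟨m, rfl⟩ := Nat.exists_eq_succ_of_ne_zero (NeZero.ne n)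
  rw [Nat.cast_succ, ← (isPrimitiveRoot_addChar_one hψ).prod_one_sub_pow_eq_order,
    Nat.succ_sub_one, ← Ico_add_one_right_eq_Icc, range_eq_Ico,
    prod_Ico_add' (fun k => 1 - ψ 1 ^ k)]
  simp only [addChar_one_pow, zero_add]

end PrimitiveAddChar

section SignOfGaussSum

open Polynomial

lemma ringChar_zmod_ne_two {n : ℕ} (hn : n ≠ 2) : ringChar (ZMod n) ≠ 2 := by
  rwa [ZMod.ringChar_zmod_n]

variable {p : ℕ} [Fact p.Prime]

lemma neZero_two_zmod (hp : p ≠ 2) : NeZero (2 : ZMod p) :=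
  ⟨Ring.two_ne_zero (ringChar_zmod_ne_two hp)⟩

lemma factorial_half_sq (hp : p ≠ 2) :
    ((p / 2).factorial : ZMod p) ^ 2 = (-1) ^ (p / 2 + 1) := by
  have hodd : Odd p := (Fact.out : p.Prime).odd_of_ne_two hp
  have hhalf : p - 1 - p / 2 = p / 2 := by grind
  have hsplit := congrArg (Nat.cast : ℕ → ZMod p)
    (Nat.factorial_mul_descFactorial (show p / 2 ≤ p - 1 by lia))
  rw [hhalf, Nat.cast_mul, ZMod.cast_descFactorial (by lia), ZMod.wilsons_lemma] at hsplit
  have hsign : (-1 : ZMod p) ^ (p / 2) * (-1) ^ (p / 2) = 1 := by simp [← mul_pow]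
  linear_combination (-1) ^ (p / 2) * hsplit - ((p / 2).factorial : ZMod p) ^ 2 * hsign

lemma prod_addChar_neg_half_sub_sq {R : Type*} [CommRing R] [IsDomain R] (hp : p ≠ 2)
    {ψ : AddChar (ZMod p) R} (hψ : ψ.IsPrimitive) :
    (∏ k ∈ Icc 1 (p / 2), (ψ (-k / 2) - ψ (k / 2))) ^ 2 = (-1) ^ (p / 2) * p := by
  have hodd : Odd p := (Fact.out : p.Prime).odd_of_ne_two hp
  rw [← prod_one_sub_addChar hψ, prod_Icc_one_eq_prod_half hodd, ← prod_pow]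
  conv_rhs => enter [1, 2]; rw [← Nat.add_sub_cancel (n := p / 2) (m := 1), ← Nat.card_Icc]
  rw [pow_card_mul_prod]
  refine prod_congr rfl fun k hk => ?_
  have hkp : k ≤ p := by rw [mem_Icc] at hk; lia
  have := neZero_two_zmod hp
  have hdouble : ∀ y, ψ y = ψ (y / 2) ^ 2 := fun y => by
    rw [sq, ← AddChar.map_add_eq_mul, add_halves]
  have hcancel : ψ (k / 2) * ψ (-k / 2) = 1 := by
    rw [← AddChar.map_add_eq_mul, neg_div, add_neg_cancel, AddChar.map_zero_eq_one]
  rw [Nat.cast_sub hkp, ZMod.natCast_self, zero_sub, hdouble k, hdouble (-k)]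
  linear_combination (ψ (k / 2) * ψ (-k / 2) - 1) * hcancel

lemma eval_one_eulerOperator_pow_sum_quadraticChar (hp : p ≠ 2) :
    ((eulerOperator (ZMod p) ^ (p / 2))
      (∑ x : ZMod p, monomial x.val (quadraticChar (ZMod p) x : ZMod p))).eval 1 = -1 := by
  have hodd : Odd p := (Fact.out : p.Prime).odd_of_ne_two hp
  have hhalf : p / 2 + p / 2 = p - 1 := by grind
  have hterm : ∀ x : ZMod p, (quadraticChar (ZMod p) x : ZMod p) * x ^ (p / 2) = x ^ (p - 1) := by
    intro x
    rw [quadraticChar_eq_pow_of_char_ne_two' (ringChar_zmod_ne_two hp), ZMod.card, ← pow_add, hhalf]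
  simp only [map_sum, eulerOperator_pow_monomial, eval_finsetSum, eval_monomial, one_pow, mul_one,
    ZMod.natCast_zmod_val, hterm, ZMod.pow_card_sub_one]
  rw [sum_boole, filter_ne', card_erase_of_mem (mem_univ _), card_univ, ZMod.card,
    Nat.cast_sub hodd.pos, ZMod.natCast_self, Nat.cast_one, zero_sub]

lemma eval_one_eulerOperator_pow_prod_half (hp : p ≠ 2) :
    ((eulerOperator (ZMod p) ^ (p / 2)) (∏ k ∈ Icc 1 (p / 2),
      (X ^ (-k / 2 : ZMod p).val - X ^ (k / 2 : ZMod p).val))).eval 1 = -1 := by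
  have := neZero_two_zmod hp
  have hdiff : ∀ k : ZMod p, -k / 2 - k / 2 = -1 * k := fun k => by
    rw [neg_div, ← neg_add', add_halves, neg_one_mul]
  have hprod := eval_one_eulerOperator_pow_prod_X_pow_sub_X_pow (R := ZMod p) (Icc 1 (p / 2))
    (fun k => (-k / 2 : ZMod p).val) (fun k => (k / 2 : ZMod p).val)
  simp only [ZMod.natCast_zmod_val, hdiff, Nat.card_Icc, Nat.add_sub_cancel] at hprod
  rw [hprod, ← pow_card_mul_prod, ← Nat.cast_prod, ← Ico_add_one_right_eq_Icc,
    prod_Ico_id_eq_factorial, Nat.card_Ico, Nat.add_sub_cancel, mul_left_comm, ← sq,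
    factorial_half_sq hp, ← pow_add, ← add_assoc]
  exact (Even.add_self _).add_one.neg_one_pow

theorem quadraticGaussSum_eq_prod {K : Type*} [Field K] [CharZero K] (hp : p ≠ 2)
    {ψ : AddChar (ZMod p) K} (hψ : ψ.IsPrimitive) :
    quadraticGaussSum ψ = ∏ k ∈ Icc 1 (p / 2), (ψ (-k / 2) - ψ (k / 2)) := by
  have hsq : quadraticGaussSum ψ ^ 2 = (∏ k ∈ Icc 1 (p / 2), (ψ (-k / 2) - ψ (k / 2))) ^ 2 := by
    rw [prod_addChar_neg_half_sub_sq hp hψ, quadraticGaussSum_sq (ringChar_zmod_ne_two hp)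
      (by simp [ringChar.eq_zero]) hψ, ZMod.card]
  refine (sq_eq_sq_iff_eq_or_eq_neg.1 hsq).resolve_right fun hneg => ?_
  let A : ℤ[X] := ∑ x : ZMod p, monomial x.val (quadraticChar (ZMod p) x)
  let B : ℤ[X] := ∏ k ∈ Icc 1 (p / 2), (X ^ (-k / 2 : ZMod p).val - X ^ (k / 2 : ZMod p).val)
  have hroot : aeval (ψ 1) (A + B) = 0 := by
    simp only [A, B, map_add, map_sum, map_prod, map_sub, map_pow, aeval_X, aeval_monomial,
      addChar_one_pow, ZMod.natCast_zmod_val, algebraMap_int_eq, eq_intCast]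
    rwa [← eq_neg_iff_add_eq_zero, ← quadraticGaussSum_eq_sum]
  have hvanish := eval_one_eulerOperator_pow_map_eq_zero (isPrimitiveRoot_addChar_one hψ) hroot
    (m := p / 2) (by have := (Fact.out : p.Prime).two_le; lia)
  have hA : A.map (Int.castRingHom (ZMod p)) =
      ∑ x : ZMod p, monomial x.val (quadraticChar (ZMod p) x : ZMod p) := by
    simp [A, Polynomial.map_sum]
  have hB : B.map (Int.castRingHom (ZMod p)) =
      ∏ k ∈ Icc 1 (p / 2), (X ^ (-k / 2 : ZMod p).val - X ^ (k / 2 : ZMod p).val) := by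
    simp [B, Polynomial.map_prod]
  rw [Polynomial.map_add, map_add, eval_add, hA, hB,
    eval_one_eulerOperator_pow_sum_quadraticChar hp,
    eval_one_eulerOperator_pow_prod_half hp] at hvanish
  exact (neZero_two_zmod hp).out (by linear_combination -hvanish)

end SignOfGaussSum

section ComplexGaussSum

open Complex
open scoped Real

lemma prod_neg_one_pow_succ_mul_I (m : ℕ) :
    ∏ k ∈ Icc 1 m, ((-1) ^ (k + 1) * I) = I ^ (m % 2) := by
  induction m with
  | zero => simp
  | succ m ih =>
    rw [prod_Icc_succ_top (by lia), ih]
    rcases Nat.even_or_odd' m with ⟨l, rfl | rfl⟩ <;> simp [Nat.add_mod, pow_succ]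

variable {p : ℕ} [Fact p.Prime]

lemma stdAddChar_intCast_div_two (hp : p ≠ 2) (j : ℤ) :
    ZMod.stdAddChar ((j : ZMod p) / 2) = (-1) ^ j * exp (j * (π / p : ℝ) * I) := by
  obtain ⟨m, hm⟩ := (Fact.out : p.Prime).odd_of_ne_two hp
  have := neZero_two_zmod hp
  have hinv : (2 : ZMod p) * (m + 1) = 1 := by
    have hcast : (p : ZMod p) = 2 * m + 1 := by exact_mod_cast congrArg (Nat.cast : ℕ → ZMod p) hm
    rw [ZMod.natCast_self] at hcast
    linear_combination -hcast
  have hdiv : (j : ZMod p) / 2 = ((j * (m + 1) : ℤ) : ZMod p) := by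
    rw [div_eq_iff two_ne_zero]
    push_cast
    linear_combination -(j : ZMod p) * hinv
  have hangle : 2 * (π : ℂ) * I * (j * (m + 1) : ℤ) / p = j * (π * I) + j * (π / p : ℝ) * I := by
    have hpm : (p : ℂ) = 2 * m + 1 := by exact_mod_cast hm
    have hp0 : (p : ℂ) ≠ 0 := NeZero.ne _
    push_cast
    field_simp
    rw [hpm]
    ring
  rw [hdiv, ZMod.stdAddChar_coe, hangle, exp_add, exp_int_mul, exp_pi_mul_I]

lemma stdAddChar_neg_half_sub_half (hp : p ≠ 2) (k : ℕ) :
    ZMod.stdAddChar (-k / 2 : ZMod p) - ZMod.stdAddChar (k / 2 : ZMod p) =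
      (-1) ^ (k + 1) * I * (2 * Real.sin (k * (π / p)) : ℝ) := by
  have hpos := stdAddChar_intCast_div_two hp k
  have hneg := stdAddChar_intCast_div_two hp (-k)
  rw [zpow_neg, ← inv_zpow, inv_neg_one] at hneg
  push_cast at hpos hneg
  rw [hpos, hneg]
  push_cast
  rw [two_sin, zpow_natCast, neg_mul, neg_mul]
  linear_combination (-1) ^ k * (exp (-(k * (π / p) * I)) - exp (k * (π / p) * I)) * I_sq

theorem quadraticGaussSum_stdAddChar (hp : p ≠ 2) :
    quadraticGaussSum (ZMod.stdAddChar (N := p)) = I ^ (p / 2 % 2) * (√p : ℝ) := by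
  set S : ℝ := ∏ k ∈ Icc 1 (p / 2), 2 * Real.sin (k * (π / p)) with hS
  have hprod : quadraticGaussSum (ZMod.stdAddChar (N := p)) = I ^ (p / 2 % 2) * S := by
    rw [quadraticGaussSum_eq_prod hp (ZMod.isPrimitive_stdAddChar p),
      ← prod_neg_one_pow_succ_mul_I, hS, ofReal_prod, ← prod_mul_distrib]
    exact prod_congr rfl fun k _ => stdAddChar_neg_half_sub_half hp k
  have hSnonneg : 0 ≤ S := prod_nonneg fun k hk => by
    have hkp : (k : ℝ) ≤ p := by rw [mem_Icc] at hk; exact_mod_cast (by lia : k ≤ p)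
    have hp0 : (0 : ℝ) < p := by exact_mod_cast (Fact.out : p.Prime).pos
    refine mul_nonneg zero_le_two (Real.sin_nonneg_of_nonneg_of_le_pi ?_ ?_)
    · exact mul_nonneg k.cast_nonneg (div_nonneg Real.pi_pos.le hp0.le)
    rw [mul_div_left_comm]
    exact mul_le_of_le_one_right Real.pi_pos.le ((div_le_one hp0).2 hkp)
  have hSsq : S ^ 2 = p := by
    have hsq := quadraticGaussSum_sq (ringChar_zmod_ne_two hp) (R := ℂ)
      (by simp [ringChar.eq_zero]) (ZMod.isPrimitive_stdAddChar p)
    rw [hprod, mul_pow, ← pow_mul, mul_comm (p / 2 % 2), pow_mul, I_sq,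
      ← neg_one_pow_eq_pow_mod_two, ZMod.card] at hsq
    exact_mod_cast mul_left_cancel₀ (pow_ne_zero _ (neg_ne_zero.2 one_ne_zero)) hsq
  rw [hprod, ← hSsq, Real.sqrt_sq hSnonneg]

end ComplexGaussSum

section Trigonometry

open Real

lemma two_mul_cos_mul_sum_alternating_sin (N : ℕ) (θ : ℝ) :
    2 * cos θ * ∑ k ∈ Icc 1 N, (-1) ^ (k + 1) * sin (2 * k * θ) =
      sin θ - (-1) ^ N * sin ((2 * N + 1) * θ) := by
  induction N with
  | zero => simp
  | succ N ih =>
    have hsub : (2 * N + 1) * θ = 2 * (N + 1 : ℕ) * θ - θ := by push_cast; ring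
    have hadd : (2 * (N + 1 : ℕ) + 1) * θ = 2 * (N + 1 : ℕ) * θ + θ := by ring
    rw [sum_Icc_succ_top (by lia), mul_add, ih, hsub, hadd, sin_sub, sin_add]
    ring

lemma cos_pi_mul_div_ne_zero {n : ℕ} (hn : Odd n) (a : ℤ) : cos (π * a / n) ≠ 0 := by
  rw [cos_ne_zero_iff]
  intro k hk
  have hn0 : (n : ℝ) ≠ 0 := by exact_mod_cast hn.pos.ne'
  rw [div_eq_div_iff hn0 two_ne_zero] at hk
  have hparity : 2 * a = (2 * k + 1) * n := by
    exact_mod_cast mul_left_cancel₀ pi_ne_zero (by linear_combination hk :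
      π * (2 * a) = π * ((2 * k + 1) * n))
  exact Int.not_even_iff_odd.2 ((odd_two_mul_add_one k).mul ((Int.odd_coe_nat n).2 hn))
    (hparity ▸ even_two_mul a)

lemma tan_pi_mul_div_eq_sum_sin {n : ℕ} (hn : Odd n) (a : ℤ) :
    tan (π * a / n) = ∑ k ∈ Icc 1 (n - 1), (-1) ^ (k + 1) * sin (2 * k * (π * a / n)) := by
  have hsum := two_mul_cos_mul_sum_alternating_sin (n - 1) (π * a / n)
  have hangle : (2 * (n - 1 : ℕ) + 1) * (π * a / n) = a * (2 * π) - π * a / n := by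
    have hn0 : (n : ℝ) ≠ 0 := by exact_mod_cast hn.pos.ne'
    rw [Nat.cast_sub hn.pos]
    push_cast
    field_simp
    ring
  rw [hangle, sin_int_mul_two_pi_sub, (Nat.Odd.sub_odd hn odd_one).neg_one_pow] at hsum
  rw [tan_eq_sin_div_cos, div_eq_iff (cos_pi_mul_div_ne_zero hn a)]
  linear_combination -hsum / 2

lemma im_sum_stdAddChar_mul_sq {n : ℕ} [NeZero n] (hn : Odd n) (k : ℕ) :
    (∑ x : ZMod n, ZMod.stdAddChar ((k : ZMod n) * x ^ 2)).im =
      2 * ∑ j ∈ Icc 1 (n / 2), sin (2 * k * (π * j ^ 2 / n)) := by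
  have hvalue : ∀ j : ℕ, (ZMod.stdAddChar ((k : ZMod n) * (j : ZMod n) ^ 2)).im =
      sin (2 * k * (π * j ^ 2 / n)) := by
    intro j
    have hcoe := ZMod.stdAddChar_coe (N := n) (k * j ^ 2)
    have hangle : 2 * (π : ℂ) * Complex.I * (k * j ^ 2 : ℤ) / n =
        (2 * k * (π * j ^ 2 / n) : ℝ) * Complex.I := by
      push_cast
      ring
    rw [hangle] at hcoe
    push_cast at hcoe ⊢
    rw [hcoe]
    exact_mod_cast Complex.exp_ofReal_mul_I_im _
  rw [sum_zmod_eq_sum_half hn, mul_sum]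
  simp only [neg_sq, Complex.add_im, Complex.im_sum]
  rw [zero_pow two_ne_zero, mul_zero, AddChar.map_zero_eq_one, Complex.one_im, zero_add]
  exact sum_congr rfl fun j _ => by rw [hvalue, ← two_mul]

end Trigonometry

section TangentSum

open Real

variable {p : ℕ} [Fact p.Prime]

lemma two_mul_sum_sin_eq_legendreSym_mul_im (hp : p ≠ 2) {k : ℕ} (hk : (k : ZMod p) ≠ 0) :
    2 * ∑ j ∈ Icc 1 (p / 2), sin (2 * k * (π * j ^ 2 / p)) =
      legendreSym p k * (quadraticGaussSum (ZMod.stdAddChar (N := p))).im := by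
  rw [← im_sum_stdAddChar_mul_sq ((Fact.out : p.Prime).odd_of_ne_two hp),
    sum_addChar_mul_sq (ringChar_zmod_ne_two hp) (ZMod.isPrimitive_stdAddChar p) hk,
    ← Complex.ofReal_intCast, Complex.im_ofReal_mul, legendreSym, Int.cast_natCast]

lemma T_eq_im_quadraticGaussSum_mul_sum (hp : p ≠ 2) :
    T p = √p / 2 * (quadraticGaussSum (ZMod.stdAddChar (N := p))).im *
      ∑ k ∈ Icc 1 (p - 1), (-1 : ℝ) ^ (k + 1) * legendreSym p k := by
  have hodd : Odd p := (Fact.out : p.Prime).odd_of_ne_two hp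
  have htan : ∀ j : ℕ, tan (π * j ^ 2 / p) =
      ∑ k ∈ Icc 1 (p - 1), (-1) ^ (k + 1) * sin (2 * k * (π * j ^ 2 / p)) := by
    intro j
    have hj := tan_pi_mul_div_eq_sum_sin hodd ((j : ℤ) ^ 2)
    push_cast at hj
    exact hj
  have hhalf : (p - 1) / 2 = p / 2 := by grind
  simp only [T, htan, hhalf]
  rw [sum_comm, mul_sum, mul_sum]
  refine sum_congr rfl fun k hk => ?_
  have hk0 : (k : ZMod p) ≠ 0 := fun h => by
    rw [mem_Icc] at hk
    exact Nat.not_dvd_of_pos_of_lt hk.1 (by lia) ((ZMod.natCast_eq_zero_iff k p).1 h)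
  rw [← mul_sum]
  linear_combination √p / 2 * (-1) ^ (k + 1) * two_mul_sum_sin_eq_legendreSym_mul_im hp hk0

lemma sum_alternating_legendreSym_eq_zero {R : Type*} [Ring R] (h1 : p % 4 = 1) :
    ∑ k ∈ Icc 1 (p - 1), (-1 : R) ^ (k + 1) * legendreSym p k = 0 := by
  have hneg : ∀ k : ℕ, legendreSym p (-k) = legendreSym p k := fun k => by
    rw [legendreSym.at_neg (by lia), ZMod.χ₄_nat_one_mod_four h1, one_mul]
  refine sum_alternating_eq_zero (by grind) fun k hk => ?_
  have hkp : k ≤ p := by rw [mem_Icc] at hk; lia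
  rw [← hneg k, legendreSym, legendreSym]
  congr 2
  push_cast [hkp]
  rw [ZMod.natCast_self, zero_sub]

theorem T_eq_half_p_alternating_legendre_sum_general (p : ℕ) [Fact p.Prime] (hp : p ≠ 2) :
    T p = (p : ℝ) / 2 *
      ∑ k ∈ Icc 1 (p - 1), (-1 : ℝ) ^ (k + 1) * (legendreSym p (k : ℤ) : ℝ) := by
  have hodd : Odd p := (Fact.out : p.Prime).odd_of_ne_two hp
  rw [T_eq_im_quadraticGaussSum_mul_sum hp]
  rcases (by grind : p % 4 = 1 ∨ p % 4 = 3) with h1 | h3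
  · simp only [sum_alternating_legendreSym_eq_zero h1, mul_zero]
  · have him : (quadraticGaussSum (ZMod.stdAddChar (N := p))).im = √p := by
      rw [quadraticGaussSum_stdAddChar hp, (by lia : p / 2 % 2 = 1)]
      simp
    rw [him, div_mul_eq_mul_div, mul_self_sqrt p.cast_nonneg]

end TangentSum

theorem T_eq_half_p_alternating_legendre_sum (p : ℕ) [Fact p.Prime] (h3 : p % 4 = 3) :
    T p = ((p : ℝ) / 2) *
      ∑ k ∈ Finset.Icc 1 (p - 1), (-1 : ℝ) ^ (k + 1) * (legendreSym p (k : ℤ) : ℝ) :=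
  T_eq_half_p_alternating_legendre_sum_general p (by rintro rfl; lia)
end

section
/- Let p be a prime with p ≡ 3 (mod 4). Then T(p) > 0 if p ≡ 3 (mod 8), and T(p) < 0 if p ≡ 7 (mod 8). -/
/-!
Write `χ` for the quadratic character modulo `p`. As `tan` is odd, summing `tan (π n² / p)` over
all residues `n` gives `∑ a, χ a * tan (π a / p)`. The identity `tan x = cot x - 2 * cot (2 * x)`
and the substitution `a ↦ 2 * a` turn this sum, times `χ 2`, into
`(χ 2 - 2) * ∑ a, χ a * cot (π a / p)`. Since `χ` is odd, the last sum is `2 * p / π * L(1, χ)`,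
which is positive by the Euler product and the nonvanishing of `L(1, χ)`. So `T p` has the sign of
`-χ 2`, which is determined by `p` modulo `8`.
-/

open Filter Finset HurwitzZeta Real Topology
open scoped ComplexOrder

section OddHurwitzZeta

lemma abs_rpow_neg_sub_rpow_neg_le {c u v s : ℝ} (hc : 0 < c) (hu : c ≤ u) (hv : c ≤ v)
    (hs : 1 ≤ s) : |u ^ (-s) - v ^ (-s)| ≤ s * c ^ (1 - s) * |u⁻¹ - v⁻¹| := by
  wlog huv : u ≤ v generalizing u v
  · rw [abs_sub_comm, abs_sub_comm u⁻¹]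
    exact this hv hu (le_of_not_ge huv)
  have hu₀ : 0 < u := hc.trans_le hu
  have hv₀ : 0 < v := hc.trans_le hv
  have bernoulli : 1 - (u / v) ^ s ≤ s * (1 - u / v) := by
    have := one_add_mul_self_le_rpow_one_add (s := u / v - 1) (by linarith [div_pos hu₀ hv₀]) hs
    rw [add_sub_cancel] at this
    linarith
  have factor : v ^ (-s) = u ^ (-s) * (u / v) ^ s := by
    rw [div_rpow hu₀.le hv₀.le, rpow_neg hu₀.le, rpow_neg hv₀.le]
    field_simp
  rw [abs_of_nonneg (sub_nonneg.2 <| rpow_le_rpow_of_nonpos hu₀ huv (by linarith)),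
    abs_of_nonneg (sub_nonneg.2 <| inv_anti₀ hu₀ huv)]
  calc u ^ (-s) - v ^ (-s) = u ^ (-s) * (1 - (u / v) ^ s) := by rw [factor]; ring
    _ ≤ u ^ (-s) * (s * (1 - u / v)) := by gcongr
    _ = s * u ^ (1 - s) * (u⁻¹ - v⁻¹) := by
      rw [sub_eq_add_neg 1 s, rpow_add hu₀, rpow_one]
      field_simp
    _ ≤ s * c ^ (1 - s) * (u⁻¹ - v⁻¹) := by
      have := sub_nonneg.2 (inv_anti₀ hu₀ huv)
      gcongr ?_ * ?_ * _
      exact rpow_le_rpow_of_nonpos hc hu (by linarith)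

lemma hasSum_inv_add_sub_inv_add_succ {x : ℝ} (hx : 0 < x) :
    HasSum (fun n : ℕ ↦ (n + x)⁻¹ - (n + 1 + x)⁻¹) x⁻¹ := by
  rw [hasSum_iff_tendsto_nat_of_nonneg
    fun n ↦ sub_nonneg.2 (inv_anti₀ (by positivity) (by linarith))]
  have telescope (n : ℕ) :
      ∑ i ∈ range n, (((i : ℝ) + x)⁻¹ - (i + 1 + x)⁻¹) = x⁻¹ - (n + x)⁻¹ := by
    simpa using sum_range_sub' (fun i : ℕ ↦ ((i : ℝ) + x)⁻¹) n
  simp only [telescope]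
  simpa using tendsto_const_nhds.sub
    (tendsto_atTop_add_const_right _ x tendsto_natCast_atTop_atTop).inv_tendsto_atTop

lemma hasSum_pi_mul_cot {x : ℝ} (hx : x ∈ Set.Ioo 0 1) :
    HasSum (fun n : ℕ ↦ (n + x)⁻¹ - (n + 1 - x)⁻¹) (π * cot (π * x)) := by
  have not_int : (x : ℂ) ∈ Complex.integerComplement := by
    rintro ⟨n, hn⟩
    have hn : (n : ℝ) = x := by exact_mod_cast hn
    have : (0 : ℝ) < n ∧ (n : ℝ) < 1 := hn ▸ hx
    norm_cast at this
    lia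
  have mittagLeffler :
      HasSum (fun n : ℕ ↦ (x - (n + 1))⁻¹ + (x + (n + 1))⁻¹) (π * cot (π * x) - x⁻¹) := by
    rw [← Complex.hasSum_ofReal]
    push_cast
    rw [← one_div (x : ℂ), cot_series_rep' not_int]
    simpa [cotTerm] using (summable_cotTerm not_int).hasSum
  convert mittagLeffler.add (hasSum_inv_add_sub_inv_add_succ hx.1) using 1
  · ext n
    rw [← neg_sub x, inv_neg, add_comm x]
    ring
  · ring

lemma hurwitzZetaOdd_ofReal {x s : ℝ} (hx : x ∈ Set.Icc 0 1) (hs : 1 < s) :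
    hurwitzZetaOdd x s =
      ((∑' n : ℕ, ((n + x) ^ (-s) - (n + 1 - x) ^ (-s))) / 2 : ℝ) := by
  rw [← (hasSum_nat_hurwitzZetaOdd_of_mem_Icc hx (by simpa using hs)).tsum_eq, ← tsum_div_const,
    Complex.ofReal_tsum]
  refine tsum_congr fun n ↦ ?_
  have h₁ : 0 ≤ (n : ℝ) + x := by linarith [hx.1, n.cast_nonneg (α := ℝ)]
  have h₂ : 0 ≤ (n : ℝ) + 1 - x := by linarith [hx.2, n.cast_nonneg (α := ℝ)]
  rw [rpow_neg h₁, rpow_neg h₂]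
  push_cast [Complex.ofReal_cpow h₁, Complex.ofReal_cpow h₂]
  simp only [one_div]

/-- The series of `hurwitzZetaOdd x` converges at `s = 1` once the terms `n` and `-n - 1` are
paired; dominated convergence identifies its sum with the limit from the right. -/
lemma tendsto_tsum_rpow_neg_sub_rpow_neg {x : ℝ} (hx : x ∈ Set.Ioo 0 1) :
    Tendsto (fun s : ℝ ↦ ∑' n : ℕ, ((n + x) ^ (-s) - (n + 1 - x) ^ (-s)))
      (𝓝[>] 1) (𝓝 (π * cot (π * x))) := by
  obtain ⟨hx₀, hx₁⟩ := hx
  set c := min x (1 - x)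
  have hc : 0 < c := lt_min hx₀ (sub_pos.2 hx₁)
  have hc₁ : c ≤ 1 := (min_le_left _ _).trans hx₁.le
  have le_left (n : ℕ) : c ≤ n + x := (min_le_left _ _).trans (by simp)
  have le_right (n : ℕ) : c ≤ n + 1 - x :=
    (min_le_right _ _).trans (by linarith [n.cast_nonneg (α := ℝ)])
  rw [← (hasSum_pi_mul_cot ⟨hx₀, hx₁⟩).tsum_eq]
  apply tendsto_tsum_of_dominated_convergence
    (bound := fun n : ℕ ↦ 2 * c⁻¹ * |((n : ℝ) + x)⁻¹ - (n + 1 - x)⁻¹|)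
  · exact (hasSum_pi_mul_cot ⟨hx₀, hx₁⟩).summable.abs.mul_left _
  · intro n
    have tendsto_rpow {u : ℝ} (hu : c ≤ u) : Tendsto (fun s : ℝ ↦ u ^ (-s)) (𝓝[>] 1) (𝓝 u⁻¹) := by
      rw [← rpow_neg_one]
      exact ((continuous_const_rpow (hc.trans_le hu).ne').comp continuous_neg).continuousWithinAt
    exact (tendsto_rpow (le_left n)).sub (tendsto_rpow (le_right n))
  · filter_upwards [Ioc_mem_nhdsGT one_lt_two] with s hs n
    refine (abs_rpow_neg_sub_rpow_neg_le hc (le_left n) (le_right n) hs.1.le).trans ?_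
    gcongr
    · exact hs.2
    · rw [← rpow_neg_one]
      exact rpow_le_rpow_of_exponent_ge hc hc₁ (by linarith [hs.2])

theorem hurwitzZetaOdd_one {x : ℝ} (hx : x ∈ Set.Ioo 0 1) :
    hurwitzZetaOdd x 1 = (π / 2 * cot (π * x) : ℝ) := by
  have continuous_value : Tendsto (fun s : ℝ ↦ hurwitzZetaOdd x s) (𝓝[>] 1)
      (𝓝 (hurwitzZetaOdd x 1)) :=
    ((differentiable_hurwitzZetaOdd x).continuous.comp
      Complex.continuous_ofReal).continuousWithinAt
  have limit_value : Tendsto (fun s : ℝ ↦ hurwitzZetaOdd x s) (𝓝[>] 1)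
      (𝓝 ((π * cot (π * x) / 2 : ℝ) : ℂ)) := by
    refine ((Complex.continuous_ofReal.tendsto _).comp
      ((tendsto_tsum_rpow_neg_sub_rpow_neg hx).div_const 2)).congr' ?_
    filter_upwards [self_mem_nhdsWithin] with s hs
    exact (hurwitzZetaOdd_ofReal (Set.Ioo_subset_Icc_self hx) hs).symm
  rw [tendsto_nhds_unique continuous_value limit_value, div_mul_eq_mul_div]

end OddHurwitzZeta

section ResidueAngle

variable {N : ℕ}

/-- The angle `π a / N` of a residue class `a` modulo `N`, computed on the representative in
`[0, N)`. Another representative changes it by a multiple of `π`, so it is meant as an argument of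
`π`-periodic functions such as `tan` and `cot`. -/
noncomputable def residueAngle (a : ZMod N) : ℝ := π * a.val / N

lemma periodic_residueAngle_intCast [NeZero N] {α : Type*} {f : ℝ → α}
    (hf : Function.Periodic f π) (k : ℤ) : f (residueAngle (k : ZMod N)) = f (π * k / N) := by
  have val_eq : (((k : ZMod N).val : ℤ) : ℝ) = k - N * (k / N : ℤ) := by
    rw [ZMod.val_intCast, Int.emod_def]
    push_cast
    rfl
  have angle_eq : residueAngle (k : ZMod N) = π * k / N - (k / N : ℤ) * π := by
    rw [residueAngle, ← Int.cast_natCast, val_eq]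
    field_simp [NeZero.ne (N : ℝ)]
  rw [angle_eq, hf.sub_int_mul_eq]

lemma cot_periodic : Function.Periodic cot π := fun x ↦ by
  simp only [cot_eq_cos_div_sin, cos_add_pi, sin_add_pi, neg_div_neg_eq]

lemma tan_residueAngle_neg [NeZero N] (a : ZMod N) :
    tan (residueAngle (-a)) = -tan (residueAngle a) := by
  have := periodic_residueAngle_intCast (N := N) tan_periodic (-a.val)
  push_cast [ZMod.natCast_zmod_val] at this
  rw [this, mul_neg, neg_div, tan_neg, residueAngle]

lemma cot_residueAngle_two_mul [NeZero N] (a : ZMod N) :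
    cot (residueAngle (2 * a)) = cot (2 * residueAngle a) := by
  have := periodic_residueAngle_intCast (N := N) cot_periodic (2 * a.val)
  push_cast [ZMod.natCast_zmod_val] at this
  rw [this, residueAngle]
  ring_nf

/-- At the zeros of `sin (2 * x)` every term is `0`, because `y / 0 = 0`. -/
lemma tan_eq_cot_sub_two_mul_cot (x : ℝ) : tan x = cot x - 2 * cot (2 * x) := by
  rw [tan_eq_sin_div_cos, cot_eq_cos_div_sin, cot_eq_cos_div_sin, sin_two_mul, cos_two_mul']
  rcases eq_or_ne (sin x) 0 with hs | hs
  · simp [hs]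
  rcases eq_or_ne (cos x) 0 with hc | hc
  · simp [hc]
  field_simp
  ring

lemma mulChar_two_mul_sum_mul_tan [NeZero N] (h2 : IsUnit (2 : ZMod N))
    (χ : MulChar (ZMod N) ℝ) :
    χ 2 * ∑ a, χ a * tan (residueAngle a) = (χ 2 - 2) * ∑ a, χ a * cot (residueAngle a) := by
  have reindex : χ 2 * ∑ a, χ a * cot (residueAngle (2 * a)) =
      ∑ a, χ a * cot (residueAngle a) := by
    rw [mul_sum]
    exact Fintype.sum_bijective (2 * ·) (IsUnit.isUnit_iff_mulLeft_bijective.1 h2) _ _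
      fun a ↦ by rw [map_mul, mul_assoc]
  have expand : ∑ a, χ a * tan (residueAngle a) =
      ∑ a, χ a * cot (residueAngle a) - 2 * ∑ a, χ a * cot (residueAngle (2 * a)) := by
    rw [mul_sum, ← sum_sub_distrib]
    refine sum_congr rfl fun a _ ↦ ?_
    rw [tan_eq_cot_sub_two_mul_cot, cot_residueAngle_two_mul]
    ring
  rw [expand]
  linear_combination -2 * reindex

end ResidueAngle

section LFunctionAtOne

variable {N : ℕ} [NeZero N]

theorem LFunction_one_of_odd {Φ : ZMod N → ℂ} (hΦ : Φ.Odd) :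
    ZMod.LFunction Φ 1 = π / (2 * N) * ∑ a, Φ a * cot (residueAngle a) := by
  rw [ZMod.LFunction_def_odd hΦ, Complex.cpow_neg_one, mul_sum, mul_sum]
  refine sum_congr rfl fun a _ ↦ ?_
  rcases eq_or_ne a 0 with rfl | ha
  · simp [hΦ.map_zero]
  have hN : (0 : ℝ) < N := by exact_mod_cast NeZero.pos N
  have mem : (a.val / N : ℝ) ∈ Set.Ioo 0 1 := by
    refine ⟨div_pos ?_ hN, (div_lt_one hN).2 ?_⟩
    · exact_mod_cast ZMod.val_pos.2 ha
    · exact_mod_cast a.val_lt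
  rw [ZMod.toAddCircle_apply, hurwitzZetaOdd_one mem, residueAngle, mul_div_assoc]
  push_cast
  ring

/-- Every Euler factor of a real character is positive at real `s > 1`. -/
lemma LFunction_nonneg_of_isQuadratic {χ : DirichletCharacter ℂ N} (hχ : χ.IsQuadratic)
    {s : ℝ} (hs : 1 < s) : 0 ≤ χ.LFunction s := by
  have hs' : 1 < (s : ℂ).re := hs
  rw [DirichletCharacter.LFunction_eq_LSeries _ hs']
  refine ge_of_tendsto' (χ.LSeries_eulerProduct hs') fun n ↦ prod_nonneg fun p hp ↦ ?_
  have hp₁ : (1 : ℝ) ≤ p := by exact_mod_cast (Nat.prime_of_mem_primesBelow hp).one_le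
  have norm_le : (p : ℝ) ^ (-s) ≤ 1 := rpow_le_one_of_one_le_of_nonpos hp₁ (by linarith)
  have pow_nonneg : 0 ≤ (p : ℝ) ^ (-s) := by positivity
  have cast_pow : (p : ℂ) ^ (-s : ℂ) = ((p : ℝ) ^ (-s) : ℝ) := by
    rw [Complex.ofReal_cpow (by positivity)]
    push_cast
    rfl
  rw [cast_pow, inv_nonneg]
  rcases hχ p with h | h | h <;> rw [h] <;> norm_cast <;> push_cast <;> linarith

theorem LFunction_one_pos_of_isQuadratic {χ : DirichletCharacter ℂ N} (hχ : χ.IsQuadratic)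
    (hχ₁ : χ ≠ 1) : 0 < χ.LFunction 1 := by
  have right_limit : Tendsto (fun s : ℝ ↦ χ.LFunction s) (𝓝[>] 1) (𝓝 (χ.LFunction 1)) :=
    ((DirichletCharacter.differentiable_LFunction hχ₁).continuous.comp
      Complex.continuous_ofReal).continuousWithinAt
  refine lt_of_le_of_ne ?_ (DirichletCharacter.LFunction_apply_one_ne_zero hχ₁).symm
  refine ge_of_tendsto right_limit ?_
  filter_upwards [self_mem_nhdsWithin] with s hs
  exact LFunction_nonneg_of_isQuadratic hχ hs

theorem sum_mul_cot_pos {χ : MulChar (ZMod N) ℝ} (hχ : χ.IsQuadratic) (hodd : χ (-1) = -1) :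
    0 < ∑ a, χ a * cot (residueAngle a) := by
  let ψ : DirichletCharacter ℂ N := χ.ringHomComp Complex.ofRealHom
  have ψ_odd : ψ.Odd := by simp [DirichletCharacter.Odd, ψ, hodd]
  have ψ_ne_one : ψ ≠ 1 := fun h ↦ by
    have h' := ψ_odd
    rw [DirichletCharacter.Odd, h, MulChar.one_apply isUnit_one.neg] at h'
    norm_num at h'
  have L_pos := LFunction_one_pos_of_isQuadratic (hχ.comp Complex.ofRealHom) ψ_ne_one
  have L_eq : ψ.LFunction 1 = (π / (2 * N) * ∑ a, χ a * cot (residueAngle a) : ℝ) := by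
    rw [DirichletCharacter.LFunction, LFunction_one_of_odd ψ_odd.to_fun]
    push_cast
    rfl
  rw [L_eq, Complex.zero_lt_real] at L_pos
  exact pos_of_mul_pos_right L_pos (by positivity)

end LFunctionAtOne

section SumsOverSquares

lemma sum_zmod_eq_sum_range {M : Type*} [AddCommMonoid M] {N : ℕ} [NeZero N] (f : ZMod N → M) :
    ∑ a, f a = ∑ n ∈ range N, f n :=
  sum_nbij' ZMod.val (↑) (fun a _ ↦ mem_range.2 a.val_lt) (fun _ _ ↦ mem_univ _)
    (fun a _ ↦ ZMod.natCast_zmod_val a) (fun _ hn ↦ ZMod.val_cast_of_lt (mem_range.1 hn))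
    (fun a _ ↦ by rw [ZMod.natCast_zmod_val])

lemma sum_zmod_of_even {M : Type*} [AddCommMonoid M] {N : ℕ} [NeZero N] (hN : Odd N)
    {f : ZMod N → M} (hf : f.Even) :
    ∑ a, f a = f 0 + 2 • ∑ n ∈ Icc 1 ((N - 1) / 2), f n := by
  obtain ⟨h, rfl⟩ := hN
  have upper_half : ∑ i ∈ range h, f ((h + 1 + i : ℕ) : ZMod (2 * h + 1)) =
      ∑ i ∈ range h, f ((i + 1 : ℕ) : ZMod (2 * h + 1)) := by
    rw [← sum_range_reflect]
    refine sum_congr rfl fun i hi ↦ ?_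
    have hi : i < h := mem_range.1 hi
    rw [← hf, neg_eq_of_add_eq_zero_left]
    rw [← Nat.cast_add, ← ZMod.natCast_self (2 * h + 1)]
    congr 1
    lia
  have lower_half : ∑ n ∈ Icc 1 h, f (n : ZMod (2 * h + 1)) =
      ∑ i ∈ range h, f ((i + 1 : ℕ) : ZMod (2 * h + 1)) := by
    rw [range_eq_Ico, sum_Ico_add' (fun n : ℕ ↦ f n), ← Ico_add_one_right_eq_Icc, zero_add]
  have split (F : ℕ → M) : ∑ n ∈ range (2 * h + 1), F n =
      F 0 + ∑ i ∈ range h, F (i + 1) + ∑ i ∈ range h, F (h + 1 + i) := by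
    rw [show 2 * h + 1 = h + 1 + h by ring, sum_range_add, sum_range_succ', add_comm (F 0)]
  rw [sum_zmod_eq_sum_range, split, upper_half, Nat.add_sub_cancel,
    Nat.mul_div_cancel_left h two_pos, lower_half, Nat.cast_zero, two_nsmul, add_assoc]

lemma sum_comp_sq {F M : Type*} [Field F] [Fintype F] [DecidableEq F] [CommRing M]
    (hF : ringChar F ≠ 2) (f : F → M) :
    ∑ x, f (x ^ 2) = ∑ a, f a + ∑ a, (quadraticChar F a : M) * f a := by
  have card_fiber (a : F) : (#{x | x ^ 2 = a} : M) = quadraticChar F a + 1 := by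
    have := congrArg (Int.cast (R := M)) (quadraticChar_card_sqrts hF a)
    simpa using this
  rw [← sum_fiberwise (g := fun x ↦ x ^ 2), ← sum_add_distrib]
  refine sum_congr rfl fun a _ ↦ ?_
  rw [sum_congr rfl (g := fun _ ↦ f a) fun x hx ↦ by rw [(mem_filter.1 hx).2], sum_const,
    nsmul_eq_mul, card_fiber]
  ring

variable {p : ℕ} [Fact p.Prime]

theorem T_eq_sum_quadraticChar_mul_tan (hp : p ≠ 2) :
    T p = √p / 2 * ∑ a : ZMod p, quadraticChar (ZMod p) a * tan (residueAngle a) := by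
  have sample (n : ℕ) : tan (residueAngle ((n : ZMod p) ^ 2)) = tan (π * n ^ 2 / p) := by
    have := periodic_residueAngle_intCast (N := p) tan_periodic (n ^ 2)
    push_cast at this
    exact this
  have half := sum_zmod_of_even (Nat.Prime.odd_of_ne_two Fact.out hp)
    (f := fun n : ZMod p ↦ tan (residueAngle (n ^ 2))) fun n ↦ by simp only [neg_sq]
  have odd : Function.Odd fun a : ZMod p ↦ tan (residueAngle a) := tan_residueAngle_neg
  have squares := sum_comp_sq (by rwa [ZMod.ringChar_zmod_n]) fun a : ZMod p ↦ tan (residueAngle a)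
  rw [odd.sum_eq_zero, zero_add, half, zero_pow two_ne_zero, odd.map_zero, zero_add] at squares
  simp only [sample, nsmul_eq_mul] at squares
  rw [← squares, T]
  push_cast
  ring

end SumsOverSquares

lemma quadraticChar_two_mul_T {p : ℕ} [Fact p.Prime] (hp : p ≠ 2) :
    quadraticChar (ZMod p) 2 * T p = (quadraticChar (ZMod p) 2 - 2) *
      (√p / 2 * ∑ a : ZMod p, quadraticChar (ZMod p) a * cot (residueAngle a)) := by
  have h2 : IsUnit (2 : ZMod p) := by
    exact_mod_cast (ZMod.isUnit_iff_coprime 2 p).2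
      (Nat.coprime_two_left.2 (Nat.Prime.odd_of_ne_two Fact.out hp))
  have := mulChar_two_mul_sum_mul_tan h2 ((quadraticChar (ZMod p)).ringHomComp (Int.castRingHom ℝ))
  simp only [MulChar.ringHomComp_apply, eq_intCast] at this
  rw [T_eq_sum_quadraticChar_mul_tan hp]
  linear_combination √p / 2 * this

lemma sum_quadraticChar_mul_cot_pos {p : ℕ} [Fact p.Prime] (h3 : p % 4 = 3) :
    0 < ∑ a : ZMod p, (quadraticChar (ZMod p) a : ℝ) * cot (residueAngle a) := by
  have at_neg_one : quadraticChar (ZMod p) (-1) = -1 := by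
    rw [quadraticChar_neg_one_iff_not_isSquare, ZMod.exists_sq_eq_neg_one_iff]
    simpa using h3
  exact sum_mul_cot_pos ((quadraticChar_isQuadratic (ZMod p)).comp (Int.castRingHom ℝ))
    (by simp [at_neg_one])

theorem T_sign (p : ℕ) (hp : p.Prime) (h3 : p % 4 = 3) :
    (p % 8 = 3 → T p > 0) ∧ (p % 8 = 7 → T p < 0) := by
  have : Fact p.Prime := ⟨hp⟩
  have hp2 : p ≠ 2 := by lia
  have at_two : quadraticChar (ZMod p) 2 = if p % 8 = 7 then 1 else -1 := by
    rw [quadraticChar_two (by rwa [ZMod.ringChar_zmod_n]), ZMod.card, ZMod.χ₈_nat_eq_if_mod_eight]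
    grind
  have sum_pos : 0 < √p / 2 * ∑ a : ZMod p, quadraticChar (ZMod p) a * cot (residueAngle a) :=
    mul_pos (by simpa using hp.pos) (sum_quadraticChar_mul_cot_pos h3)
  have relation := quadraticChar_two_mul_T hp2
  constructor <;> intro h8
  · rw [at_two, if_neg (by lia)] at relation
    push_cast at relation
    linarith
  · rw [at_two, if_pos h8] at relation
    push_cast at relation
    linarith
end
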